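/- Let R be a noetherian normal integral domain with fraction field K and let A be a finite flat R-algebra with split generic fiber A^K. For each simple A^K-module S, let Ω_S: Z(A^K) → K be its central character (z ∈ Z(A^K) acts on S by the scalar Ω_S(z)); its restriction to Z(A) takes values in R, giving an R-algebra morphism Ω'_S: Z(A) → R. Then for any p ∈ Spec(R), two simple A^K-modules S and T lie in the same p-family (i.e., they belong to the same block of A_p) if and only if Ω'_S(z) ≡ Ω'_T(z) mod p for all z ∈ Z(A). Consequently, if z_1, …, z_n generate Z(A) as an R-algebra and F, F' are two distinct blocks of A^K with central characters Ω_F, Ω_{F'}, then the gluing locus {p ∈ Spec(R) : F and F' lie in the same block of A_p} equals the zero locus V({Ω_F(z_i) − Ω_{F'}(z_i) : i = 1, …, n}). -/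

import Mathlib

open TensorProduct

section BlockDefs
variable {B : Type*} [Ring B]

def IsBlockIdemOn (S : Set B) (e : B) : Prop :=
  e ∈ S ∧ IsIdempotentElem e ∧ e ≠ 0 ∧ (∀ x ∈ S, e * x = x * e) ∧
    ∀ f g : B, f ∈ S → g ∈ S → (∀ x ∈ S, f * x = x * f) → (∀ x ∈ S, g * x = x * g) →
      IsIdempotentElem f → IsIdempotentElem g → f * g = 0 → f + g = e → f = 0 ∨ g = 0

def IsBlockIdem (e : B) : Prop := IsBlockIdemOn Set.univ e

end BlockDefs

def IsSplitAlgebra (K : Type u) (B : Type v) [Field K] [Ring B] [Algebra K B] : Prop :=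
  ∀ (S : Type v) [AddCommGroup S] [Module B S], IsSimpleModule B S →
    ∀ f : S →ₗ[B] S, ∃ k : K, ∀ s : S, f s = algebraMap K B k • s

/-- The subring `A_p` of `A^K = K ⊗[R] A`. -/
def localizedAt (R : Type u) [CommRing R] [IsDomain R] (A : Type u) [Ring A] [Algebra R A]
    (p : PrimeSpectrum R) : Set (FractionRing R ⊗[R] A) :=
  {x | ∃ (a : A) (s : R), s ∉ p.asIdeal ∧ s • x = Algebra.TensorProduct.includeRight a}

open Polynomial in
theorem aux_minpoly_irred {K : Type u} {B : Type v} [Field K] [Ring B] [Algebra K B]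
    (hsplit : IsSplitAlgebra K B) (z : B) (hz : ∀ x, z * x = x * z) (hint : IsIntegral K z)
    (g : K[X]) (hg : Irreducible g) (hd : g ∣ minpoly K z) : g.degree = 1 := by
  obtain ⟨c, hc⟩ := hd
  have hm0 : minpoly K z ≠ 0 := minpoly.ne_zero hint
  have hc0 : c ≠ 0 := by rintro rfl; simp [hc] at hm0
  have hcz : aeval z c ≠ 0 := by
    intro h
    have h1 := natDegree_le_of_dvd (minpoly.dvd K z h) hc0
    rw [hc, natDegree_mul hg.ne_zero hc0] at h1
    have := hg.natDegree_pos
    omega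
  have hne : Ideal.span {aeval z g} ≠ ⊤ := by
    intro h
    have h1 : (1 : B) ∈ Ideal.span {aeval z g} := by rw [h]; trivial
    obtain ⟨y, hy⟩ := Ideal.mem_span_singleton'.1 h1
    apply hcz
    have h2 : aeval z g * aeval z c = 0 := by rw [← map_mul, ← hc, minpoly.aeval]
    rw [← one_mul (aeval z c), ← hy, mul_assoc, h2, mul_zero]
  obtain ⟨M, hM, hle⟩ := Ideal.exists_le_maximal _ hne
  have hs : IsSimpleModule B (B ⧸ M) := isSimpleModule_iff_isCoatom.2 hM.out
  let f : (B ⧸ M) →ₗ[B] (B ⧸ M) :=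
    { toFun := fun s => z • s
      map_add' := fun a b => smul_add _ _ _
      map_smul' := fun a b => by simp only [RingHom.id_apply, smul_smul, hz] }
  obtain ⟨k, hk⟩ := hsplit (B ⧸ M) hs f
  have hk : ∀ s : B ⧸ M, z • s = algebraMap K B k • s := hk
  have hev : ∀ (P : K[X]) (s : B ⧸ M), aeval z P • s = algebraMap K B (P.eval k) • s := by
    intro P
    induction P using Polynomial.induction_on with
    | C a => intro s; simp
    | add p q hp hq => intro s; simp only [map_add, add_smul, hp, hq, eval_add]
    | monomial n a h =>
      intro s
      rw [pow_succ, ← mul_assoc, map_mul, mul_smul, aeval_X, hk, h, smul_smul, ← map_mul]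
      simp
  have h0 : aeval z g • (Submodule.Quotient.mk 1 : B ⧸ M) = 0 := by
    rw [← Submodule.Quotient.mk_smul, Submodule.Quotient.mk_eq_zero]
    rw [smul_eq_mul, mul_one]
    exact hle (Ideal.mem_span_singleton_self _)
  rw [hev, ← Submodule.Quotient.mk_smul, Submodule.Quotient.mk_eq_zero, smul_eq_mul, mul_one] at h0
  have hk0 : g.eval k = 0 := by
    by_contra hne
    apply hM.ne_top
    rw [Ideal.eq_top_iff_one]
    have := M.mul_mem_left (algebraMap K B (g.eval k)⁻¹) h0
    rwa [← map_mul, inv_mul_cancel₀ hne, map_one] at this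
  exact degree_eq_one_of_irreducible_of_root hg hk0

open Polynomial in
theorem aux_roots {R K A B : Type*} [CommRing R] [IsDomain R] [IsIntegrallyClosed R]
    [Field K] [Algebra R K] [IsFractionRing R K] [Ring A] [Algebra R A] [Module.Finite R A]
    [Ring B] [Algebra R B] [Algebra K B] [IsScalarTower R K B] (ι : A →ₐ[R] B)
    (hι : Function.Injective ι) (hsplit : IsSplitAlgebra K B) (z : A)
    (hz : ∀ x, ι z * x = x * ι z) :
    ∃ rs : Multiset R, aeval z (rs.map fun r => X - C r).prod = 0 := by
  obtain ⟨P, hPm, hP⟩ := Algebra.IsIntegral.isIntegral (R := R) z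
  have hP : aeval z P = 0 := hP
  have hP2 : aeval (ι z) (P.map (algebraMap R K)) = 0 := by
    rw [aeval_map_algebraMap, aeval_algHom_apply, hP, map_zero]
  have hint : IsIntegral K (ι z) := ⟨P.map (algebraMap R K), hPm.map _, hP2⟩
  have hs : (minpoly K (ι z)).Splits := by
    rw [splits_iff_splits]
    right
    intro g hg hd
    exact aux_minpoly_irred hsplit _ hz hint g hg hd
  have hr : ∀ k ∈ (minpoly K (ι z)).roots, ∃ r, algebraMap R K r = k := by
    intro k hk
    apply IsIntegrallyClosed.isIntegral_iff.1
    refine ⟨P, hPm, ?_⟩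
    have h1 := (minpoly.dvd K (ι z) hP2)
    have h2 : (P.map (algebraMap R K)).eval k = 0 :=
      eval_eq_zero_of_dvd_of_eval_eq_zero h1 (isRoot_of_mem_roots hk)
    rwa [eval_map] at h2
  choose! φ hφ using hr
  refine ⟨(minpoly K (ι z)).roots.map φ, hι ?_⟩
  rw [map_zero, ← aeval_algHom_apply, ← aeval_map_algebraMap K, Polynomial.map_multiset_prod]
  have := hs.eq_prod_roots_of_monic (minpoly.monic hint)
  rw [← minpoly.aeval K (ι z)]
  congr 1
  conv_rhs => rw [this]
  rw [Multiset.map_map, Multiset.map_map]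
  congr 1
  apply Multiset.map_congr rfl
  intro k hk
  simp [hφ k hk]

open Polynomial in
theorem aux_coprime {R : Type*} [CommRing R] (p : Ideal R) [p.IsPrime] (s t : Multiset R)
    (h : ∀ a ∈ s, ∀ b ∈ t, b - a ∉ p) :
    ∃ (u v : R[X]) (d : R), d ∉ p ∧
      u * (s.map fun r => X - C r).prod + v * (t.map fun r => X - C r).prod = C d := by
  have h1 : (1 : R) ∉ p := (Ideal.ne_top_iff_one p).1 Ideal.IsPrime.ne_top'
  have key : ∀ a, (∀ b ∈ t, b - a ∉ p) → ∃ (u v : R[X]) (d : R), d ∉ p ∧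
      u * (X - C a) + v * (t.map fun r => X - C r).prod = C d := by
    intro a
    induction t using Multiset.induction_on with
    | empty => intro _; exact ⟨0, 1, 1, h1, by simp⟩
    | cons b t ih =>
      intro hb
      obtain ⟨u, v, d, hd, e⟩ := ih (fun a ha b hb => h a ha b (Multiset.mem_cons_of_mem hb))
        (fun b hb' => hb b (Multiset.mem_cons_of_mem hb'))
      have hba := hb b (Multiset.mem_cons_self b t)
      refine ⟨u * ((X - C a) - (X - C b)) + v * (t.map fun r => X - C r).prod, -v, d * (b - a),
        fun hh => (Ideal.IsPrime.mem_or_mem inferInstance hh).elim hd hba, ?_⟩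
      rw [Multiset.map_cons, Multiset.prod_cons, C_mul, ← e, C_sub]
      ring
  induction s using Multiset.induction_on with
  | empty => exact ⟨1, 0, 1, h1, by simp⟩
  | cons a s ih =>
    obtain ⟨u, v, d, hd, e⟩ := ih (fun a ha => h a (Multiset.mem_cons_of_mem ha))
    obtain ⟨u', v', d', hd', e'⟩ := key a (h a (Multiset.mem_cons_self a s))
    refine ⟨u * u', u * (s.map fun r => X - C r).prod * v' + v * C d', d * d',
      fun hh => (Ideal.IsPrime.mem_or_mem inferInstance hh).elim hd hd', ?_⟩
    rw [Multiset.map_cons, Multiset.prod_cons, C_mul, ← e, ← e']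
    ring

section Act
variable {R K A B S : Type*} [CommRing R] [IsDomain R]
    [Field K] [Algebra R K] [IsFractionRing R K] [Ring A] [Algebra R A]
    [Ring B] [Algebra R B] [Algebra K B] [IsScalarTower R K B]
    [AddCommGroup S] [Module B S]

theorem aux_cancel (K : Type*) [Field K] [Algebra R K] [IsFractionRing R K] [Algebra K B]
    [IsScalarTower R K B] (c : R) (hc : c ≠ 0) (x : S)
    (h : algebraMap R B c • x = 0) : x = 0 := by
  have hk : algebraMap R K c ≠ 0 := by
    simpa using hc
  have : algebraMap K B (algebraMap R K c)⁻¹ • algebraMap R B c • x = x := by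
    rw [IsScalarTower.algebraMap_apply R K B, smul_smul, ← map_mul, inv_mul_cancel₀ hk, map_one,
      one_smul]
  rw [← this, h, smul_zero]

theorem aux_uniq (K : Type*) [Field K] [Algebra R K] [IsFractionRing R K] [Algebra K B]
    [IsScalarTower R K B] [Nontrivial S] (c c' : R)
    (h : ∀ x : S, algebraMap R B c • x = algebraMap R B c' • x) : c = c' := by
  by_contra hne
  obtain ⟨x, hx⟩ := exists_ne (0 : S)
  apply hx
  apply aux_cancel K (B := B) (c - c') (sub_ne_zero.2 hne)
  rw [map_sub, sub_smul, h, sub_self]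

theorem aux_act (K : Type*) [Field K] [Algebra R K] [IsFractionRing R K] [Algebra K B]
    [IsScalarTower R K B] [Nontrivial S] (e b : B) (s c : R) (hs : s ≠ 0) (he : e * e = e)
    (hb : s • e = b) (hc : ∀ x : S, b • x = algebraMap R B c • x) :
    (c = s ∧ ∀ x : S, e • x = x) ∨ (c = 0 ∧ ∀ x : S, e • x = 0) := by
  subst hb
  have hc' : ∀ x : S, algebraMap R B s • e • x = algebraMap R B c • x := by
    intro x; rw [← hc, Algebra.smul_def, mul_smul]
  have h1 : c * c = s * c := by
    apply aux_uniq (S := S) (B := B) K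
    intro x
    rw [map_mul, mul_smul, ← hc x, ← hc, smul_smul, map_mul, mul_smul (algebraMap R B s), ← hc, smul_smul]
    congr 1
    rw [← Algebra.smul_def, smul_mul_smul_comm, he, smul_smul]
  rcases eq_or_ne c 0 with h | h
  · refine Or.inr ⟨h, fun x => aux_cancel K (B := B) s hs _ ?_⟩
    rw [hc', h]; simp
  · have h2 : c = s := mul_right_cancel₀ h h1
    refine Or.inl ⟨h2, fun x => sub_eq_zero.1 <| aux_cancel K (B := B) s hs _ ?_⟩
    rw [smul_sub, hc', h2, sub_self]

open Polynomial in
theorem aux_eval (ι : A →ₐ[R] B) (z : A) (c : R)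
    (h : ∀ x : S, ι z • x = algebraMap R B c • x) (P : R[X]) (x : S) :
    ι (aeval z P) • x = algebraMap R B (P.eval c) • x := by
  induction P using Polynomial.induction_on generalizing x with
  | C a => simp
  | add p q hp hq => simp only [map_add, add_smul, hp, hq, eval_add]
  | monomial n a ih =>
    rw [pow_succ, ← mul_assoc, map_mul, map_mul, mul_smul, aeval_X, h, ih, smul_smul, ← map_mul]
    simp

theorem aux_prim (K : Type*) [Field K] [Algebra K B] [Module.Finite K B] [Nontrivial S] (L : Set B)
    (h1 : (1 : B) ∈ L)
    (hact : ∀ e ∈ L, e * e = e → (∀ x ∈ L, e * x = x * e) →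
      (∀ x : S, e • x = x) ∨ (∀ x : S, e • x = 0)) :
    ∃ e, IsBlockIdemOn L e ∧ ∀ x : S, e • x = x := by
  let I : Set (Submodule K B) := {N | ∃ e ∈ L, e * e = e ∧ (∀ x ∈ L, e * x = x * e) ∧
    (∀ x : S, e • x = x) ∧ N = LinearMap.range (LinearMap.mulLeft K e)}
  have hne : I.Nonempty := ⟨_, 1, h1, by simp, by simp, by simp, rfl⟩
  obtain ⟨N, ⟨e, heL, hee, hec, heS, rfl⟩, hmin⟩ :=
    (wellFounded_lt (α := Submodule K B)).has_min I hne
  have key : ∀ f g : B, f ∈ L → g ∈ L → (∀ x ∈ L, f * x = x * f) → f * f = f → f * g = 0 →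
      f + g = e → (∀ x : S, f • x = x) → g * g = g → g = 0 := by
    intro f g hf hg hfc hff hfg hsum hfS hgg
    have hgf : g * f = 0 := by rw [← hfc g hg, hfg]
    have hle : LinearMap.range (LinearMap.mulLeft K f) ≤ LinearMap.range (LinearMap.mulLeft K e) := by
      rintro _ ⟨x, rfl⟩
      refine ⟨f * x, ?_⟩
      simp [← hsum, ← mul_assoc, add_mul, hff, hgf]
    have heq : LinearMap.range (LinearMap.mulLeft K f) = LinearMap.range (LinearMap.mulLeft K e) := by
      by_contra hne
      exact hmin _ ⟨f, hf, hff, hfc, hfS, rfl⟩ (lt_of_le_of_ne hle hne)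
    have : g ∈ LinearMap.range (LinearMap.mulLeft K f) := by
      rw [heq]
      exact ⟨g, by simp [← hsum, add_mul, hfg, hgg]⟩
    obtain ⟨y, hy⟩ := this
    have hy : f * y = g := hy
    have h3 : f * g = g := by rw [← hy, ← mul_assoc, hff]
    rw [← h3, hfg]
  refine ⟨e, ⟨heL, hee, ?_, hec, ?_⟩, heS⟩
  · rintro rfl
    obtain ⟨x, hx⟩ := exists_ne (0 : S)
    exact hx (by rw [← heS x, zero_smul])
  · intro f g hf hg hfc hgc hff hgg hfg hsum
    rcases hact f hf hff hfc with h | h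
    · exact Or.inr (key f g hf hg hfc hff hfg hsum h hgg)
    · left
      refine key g f hg hf hgc hgg (by rw [hgc f hf, hfg]) (by rw [add_comm, hsum]) ?_ hff
      intro x
      have := heS x
      rwa [← hsum, add_smul, h, zero_add] at this
end Act

theorem aux_zs {B S : Type*} [Ring B] [AddCommGroup S] [Module B S] (b : B) (hb : b = 0) (x : S) :
    b • x = 0 := by rw [hb, zero_smul]

/-- **Theorem `maintheorem_blex_descr`.** Let `R` be a noetherian normal domain and `A` a finite
flat `R`-algebra with split generic fiber. Let `S`, `T` be simple `A^K`-modules with central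
characters `Ω_S`, `Ω_T`, whose restrictions to `Z(A)` take values `Ω'_S, Ω'_T` in `R`. Then `S`
and `T` lie in the same `p`-family iff `Ω'_S ≡ Ω'_T mod p` on `Z(A)`; consequently, if
`z 0, …, z (n-1)` generate `Z(A)` as an `R`-algebra and `S`, `T` lie in distinct blocks of `A^K`,
the gluing locus is the zero locus of the differences `Ω'_S(z i) - Ω'_T(z i)`. -/
theorem stmt12 (R : Type u) [CommRing R] [IsDomain R] [IsNoetherianRing R] [IsIntegrallyClosed R]
    (A : Type u) [Ring A] [Algebra R A] [Module.Finite R A] [Module.Flat R A]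
    (hsplit : IsSplitAlgebra (FractionRing R) (FractionRing R ⊗[R] A))
    (S T : Type u) [AddCommGroup S] [Module (FractionRing R ⊗[R] A) S]
    [AddCommGroup T] [Module (FractionRing R ⊗[R] A) T]
    (hS : IsSimpleModule (FractionRing R ⊗[R] A) S)
    (hT : IsSimpleModule (FractionRing R ⊗[R] A) T)
    (ΩS ΩT : A → R)
    (hΩS : ∀ z ∈ Set.center A, ∀ s : S,
      (Algebra.TensorProduct.includeRight z : FractionRing R ⊗[R] A) • s =
        algebraMap R (FractionRing R ⊗[R] A) (ΩS z) • s)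
    (hΩT : ∀ z ∈ Set.center A, ∀ t : T,
      (Algebra.TensorProduct.includeRight z : FractionRing R ⊗[R] A) • t =
        algebraMap R (FractionRing R ⊗[R] A) (ΩT z) • t) :
    (∀ p : PrimeSpectrum R,
      (∃ e, IsBlockIdemOn (localizedAt R A p) e ∧ (∀ s : S, e • s = s) ∧ (∀ t : T, e • t = t)) ↔
        ∀ z ∈ Set.center A, ΩS z - ΩT z ∈ p.asIdeal) ∧
    (¬ (∃ e : FractionRing R ⊗[R] A, IsBlockIdem e ∧
          (∀ s : S, e • s = s) ∧ (∀ t : T, e • t = t)) →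
      ∀ (n : ℕ) (z : Fin n → A), (∀ i, z i ∈ Set.center A) →
        Algebra.adjoin R (Set.range z) = Subalgebra.center R A →
        {p : PrimeSpectrum R | ∃ e, IsBlockIdemOn (localizedAt R A p) e ∧
            (∀ s : S, e • s = s) ∧ (∀ t : T, e • t = t)} =
          PrimeSpectrum.zeroLocus (Set.range fun i => ΩS (z i) - ΩT (z i))) := by
  have hι : Function.Injective
      (Algebra.TensorProduct.includeRight : A →ₐ[R] FractionRing R ⊗[R] A) :=
    Algebra.TensorProduct.includeRight_injective (IsFractionRing.injective R (FractionRing R))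
  have hnS : Nontrivial S := IsSimpleModule.nontrivial (FractionRing R ⊗[R] A) S
  have hnT : Nontrivial T := IsSimpleModule.nontrivial (FractionRing R ⊗[R] A) T
  generalize hιe : (Algebra.TensorProduct.includeRight : A →ₐ[R] FractionRing R ⊗[R] A) = ι at *
  have hL : ∀ p : PrimeSpectrum R, ∀ x, x ∈ localizedAt R A p ↔
      ∃ (a : A) (s : R), s ∉ p.asIdeal ∧ s • x = ι a := by
    intro p x; rw [← hιe]; rfl
  have hcomm : ∀ z ∈ Set.center A, ∀ x, ι z * x = x * ι z := by
    intro z hz x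
    induction x using TensorProduct.induction_on with
    | zero => simp
    | add x y hx hy => rw [mul_add, add_mul, hx, hy]
    | tmul k a =>
      rw [← hιe]
      simp [((Set.mem_center_iff.1 hz).comm a).eq]
  have hone : ∀ p : PrimeSpectrum R, (1 : R) ∉ p.asIdeal := fun p =>
    (Ideal.ne_top_iff_one _).1 p.2.ne_top'
  have hιL : ∀ (p : PrimeSpectrum R) (a : A), ι a ∈ localizedAt R A p := fun p a =>
    (hL p _).2 ⟨a, 1, hone p, one_smul _ _⟩
  have hcen : ∀ (p : PrimeSpectrum R) (e : FractionRing R ⊗[R] A) (a : A) (s : R),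
      (∀ x ∈ localizedAt R A p, e * x = x * e) → s • e = ι a → a ∈ Set.center A := by
    intro p e a s h hs
    rw [Semigroup.mem_center_iff]
    intro b
    apply hι
    rw [map_mul, map_mul, ← hs, smul_mul_assoc, mul_smul_comm, h _ (hιL p b)]
  have main : ∀ p : PrimeSpectrum R,
      (∃ e, IsBlockIdemOn (localizedAt R A p) e ∧ (∀ s : S, e • s = s) ∧ (∀ t : T, e • t = t)) ↔
        ∀ z ∈ Set.center A, ΩS z - ΩT z ∈ p.asIdeal := by
    intro p
    constructor
    · rintro ⟨e, ⟨heL, hee, he0, hec, hprim⟩, heS, heT⟩ z hz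
      by_contra hnot
      obtain ⟨rs, hrs⟩ := aux_roots (K := FractionRing R) ι hι hsplit z (hcomm z hz)
      classical
      let G := rs.filter (fun r => r - ΩS z ∈ p.asIdeal)
      let H := rs.filter (fun r => ¬ (r - ΩS z ∈ p.asIdeal))
      have hGH : G + H = rs := Multiset.filter_add_not _ _
      obtain ⟨u, v, d, hd, huv⟩ := aux_coprime p.asIdeal G H (by
        intro a ha b hb hab
        have ha := (Multiset.mem_filter.1 ha).2
        apply (Multiset.mem_filter.1 hb).2
        have := p.asIdeal.add_mem ha hab
        have h2 : b - ΩS z = (a - ΩS z) + (b - a) := by ring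
        rwa [h2])
      have hroot : ∀ (c : R) (_ : (Polynomial.eval c
          (rs.map fun r => Polynomial.X - Polynomial.C r).prod) = 0), c ∈ rs := by
        intro c hc
        rw [Polynomial.eval_multiset_prod, Multiset.map_map, Multiset.prod_eq_zero_iff,
          Multiset.mem_map] at hc
        obtain ⟨r, hr, h⟩ := hc
        have : c - r = 0 := by simpa using h
        rwa [sub_eq_zero.1 this]
      have hevS := aux_eval ι z (ΩS z) (hΩS z hz)
      have hevT := aux_eval ι z (ΩT z) (hΩT z hz)
      have hSr : ΩS z ∈ rs := by
        apply hroot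
        apply aux_uniq (S := S) (B := FractionRing R ⊗[R] A) (FractionRing R)
        intro x
        rw [← hevS, hrs, aux_zs _ (map_zero _), aux_zs _ (map_zero _)]
      have hTr : ΩT z ∈ rs := by
        apply hroot
        apply aux_uniq (S := T) (B := FractionRing R ⊗[R] A) (FractionRing R)
        intro x
        rw [← hevT, hrs, aux_zs _ (map_zero _), aux_zs _ (map_zero _)]
      have hSG : ΩS z ∈ G := Multiset.mem_filter.2 ⟨hSr, by simp⟩
      have hTH : ΩT z ∈ H := Multiset.mem_filter.2 ⟨hTr, by
        rwa [← neg_mem_iff, neg_sub]⟩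
      have hz0 : ∀ (M : Multiset R) (c : R), c ∈ M → Polynomial.eval c
          (M.map fun r => Polynomial.X - Polynomial.C r).prod = 0 := by
        intro M c hc
        rw [Polynomial.eval_multiset_prod, Multiset.map_map, Multiset.prod_eq_zero_iff,
          Multiset.mem_map]
        exact ⟨c, hc, by simp⟩
      set g := (G.map fun r => Polynomial.X - Polynomial.C r).prod with hg
      set h := (H.map fun r => Polynomial.X - Polynomial.C r).prod with hh
      have hgh : Polynomial.aeval z (g * h) = 0 := by
        rw [← hrs, ← hGH, Multiset.map_add, Multiset.prod_add]
      have hd0 : d ≠ 0 := by rintro rfl; exact hd (Ideal.zero_mem _)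
      set w := Polynomial.aeval z (v * h) with hw
      have hwc : w ∈ Set.center A := by
        have h1 : Algebra.adjoin R {z} ≤ Subalgebra.center R A := Algebra.adjoin_le (by
          rintro _ rfl
          exact hz)
        exact h1 (Polynomial.aeval_mem_adjoin_singleton R z)
      have hww : w * w = d • w := by
        have : (v * h) * (v * h) = Polynomial.C d * (v * h) - u * v * (g * h) := by
          rw [← huv]; ring
        rw [hw, ← map_mul, this, map_sub, map_mul _ (u * v), hgh, mul_zero, sub_zero, map_mul,
          Polynomial.aeval_C, Algebra.smul_def]
      have hwS : ∀ x : S, ι w • x = algebraMap R (FractionRing R ⊗[R] A) d • x := by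
        intro x
        rw [hevS]
        congr 2
        have := congrArg (Polynomial.eval (ΩS z)) huv
        rw [Polynomial.eval_add, Polynomial.eval_mul, hz0 G _ hSG, mul_zero, zero_add,
          Polynomial.eval_C] at this
        exact this
      have hwT : ∀ x : T, ι w • x = 0 := by
        intro x
        rw [hevT, Polynomial.eval_mul, hz0 H _ hTH]
        simp
      have hdK : algebraMap R (FractionRing R) d ≠ 0 := by simpa using hd0
      set e1 : FractionRing R ⊗[R] A := (algebraMap R (FractionRing R) d)⁻¹ • ι w with he1
      have hde1 : d • e1 = ι w := by
        rw [he1, ← algebraMap_smul (FractionRing R) d, smul_smul, mul_inv_cancel₀ hdK, one_smul]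
      have hee1 : e1 * e1 = e1 := by
        conv_lhs => rw [he1, smul_mul_assoc, mul_smul_comm, ← map_mul, hww, map_smul,
          ← algebraMap_smul (FractionRing R) d, smul_smul _ _ (ι w), inv_mul_cancel₀ hdK, one_smul]
      have he1c : ∀ x, e1 * x = x * e1 := by
        intro x
        rw [he1, smul_mul_assoc, mul_smul_comm, hcomm w hwc]
      have he1S : ∀ x : S, e1 • x = x := by
        rcases aux_act (S := S) (FractionRing R) e1 (ι w) d d hd0 hee1 hde1 hwS with ⟨_, h⟩ | ⟨h, _⟩
        · exact h
        · exact absurd h hd0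
      have he1T : ∀ x : T, e1 • x = 0 := by
        rcases aux_act (S := T) (FractionRing R) e1 (ι w) d 0 hd0 hee1 hde1
          (fun x => by rw [hwT, aux_zs _ (map_zero _)]) with ⟨h, _⟩ | ⟨_, h⟩
        · exact absurd h.symm hd0
        · exact h
      obtain ⟨a, s, hs, hsa⟩ := (hL p e).1 heL
      have hsd : s * d ∉ p.asIdeal := fun hh =>
        (Ideal.IsPrime.mem_or_mem inferInstance hh).elim hs hd
      have hmul : (s * d) • (e * e1) = ι (a * w) := by
        rw [map_mul, ← hsa, ← hde1, smul_mul_smul_comm]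
      have hee : e * e = e := hee
      have h1 : e * (e * e1) = e * e1 := by rw [← mul_assoc, hee]
      have h2 : (e * e1) * e = e * e1 := by rw [mul_assoc, he1c, h1]
      have h3 : (e * e1) * (e * e1) = e * e1 := by rw [← mul_assoc, h2, mul_assoc, hee1]
      have hc3 : ∀ x ∈ localizedAt R A p, (e * e1) * x = x * (e * e1) := by
        intro x hx
        rw [mul_assoc, he1c, ← mul_assoc, hec x hx, mul_assoc]
      rcases hprim (e * e1) (e - e * e1) ((hL _ _).2 ⟨_, _, hsd, hmul⟩)
        ((hL _ _).2 ⟨d • a - a * w, _, hsd, by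
          rw [smul_sub, hmul, map_sub, map_smul, ← hsa, smul_smul, mul_comm]⟩) hc3
        (fun x hx => by rw [sub_mul, mul_sub, hec x hx, hc3 x hx]) h3
        (by
          show (e - e * e1) * (e - e * e1) = _
          rw [sub_mul, mul_sub, mul_sub, hee, h1, h2, h3]; abel)
        (by rw [mul_sub, h2, h3, sub_self]) (by abel) with h | h
      · obtain ⟨x, hx⟩ := exists_ne (0 : S)
        apply hx
        rw [← heS x, ← he1S x, smul_smul, aux_zs _ h]
      · obtain ⟨x, hx⟩ := exists_ne (0 : T)
        apply hx
        rw [← heT x, sub_eq_zero.1 h, mul_smul, he1T, smul_zero]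
    · intro hcong
      have hne : ∀ s : R, s ∉ p.asIdeal → s ≠ 0 := by
        rintro s hs rfl; exact hs (Ideal.zero_mem _)
      obtain ⟨e, he, heS⟩ := aux_prim (S := S) (FractionRing R) (localizedAt R A p)
        ((hL _ _).2 ⟨1, 1, hone p, by simp⟩) (by
          intro e heL hee hec
          obtain ⟨a, s, hs, hsa⟩ := (hL p e).1 heL
          exact (aux_act (S := S) (FractionRing R) e (ι a) s (ΩS a) (hne s hs) hee hsa
            (hΩS a (hcen p e a s hec hsa))).imp And.right And.right)
      refine ⟨e, he, heS, ?_⟩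
      obtain ⟨heL, hee, he0, hec, -⟩ := he
      obtain ⟨a, s, hs, hsa⟩ := (hL p e).1 heL
      have hac := hcen p e a s hec hsa
      rcases aux_act (S := S) (FractionRing R) e (ι a) s (ΩS a) (hne s hs) hee hsa
        (hΩS a hac) with ⟨h1, _⟩ | ⟨_, h1⟩
      · rcases aux_act (S := T) (FractionRing R) e (ι a) s (ΩT a) (hne s hs) hee hsa
          (hΩT a hac) with ⟨_, h2⟩ | ⟨h2, _⟩
        · exact h2
        · have := hcong a hac
          rw [h1, h2, sub_zero] at this
          exact absurd this hs
      · obtain ⟨x, hx⟩ := exists_ne (0 : S)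
        exact absurd (by rw [← heS x, h1]) hx
  refine ⟨main, ?_⟩
  intro _ n z hz hadj
  ext p
  rw [Set.mem_ofPred_eq, main p, PrimeSpectrum.mem_zeroLocus]
  constructor
  · rintro h _ ⟨i, rfl⟩
    exact h _ (hz i)
  · intro h x hx
    have hx' : x ∈ Algebra.adjoin R (Set.range z) := by rw [hadj]; exact hx
    have hAc : ∀ y ∈ Algebra.adjoin R (Set.range z), y ∈ Set.center A := by
      intro y hy; rw [hadj] at hy; exact hy
    have uS : ∀ y ∈ Set.center A, ∀ c, (∀ x : S, ι y • x = algebraMap R (FractionRing R ⊗[R] A) c • x) → ΩS y = c := by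
      intro y hy c hc
      apply aux_uniq (S := S) (B := FractionRing R ⊗[R] A) (FractionRing R)
      intro x; rw [← hc, hΩS y hy]
    have uT : ∀ y ∈ Set.center A, ∀ c, (∀ x : T, ι y • x = algebraMap R (FractionRing R ⊗[R] A) c • x) → ΩT y = c := by
      intro y hy c hc
      apply aux_uniq (S := T) (B := FractionRing R ⊗[R] A) (FractionRing R)
      intro x; rw [← hc, hΩT y hy]
    clear hx
    induction hx' using Algebra.adjoin_induction with
    | mem x hx => obtain ⟨i, rfl⟩ := hx; exact h ⟨i, rfl⟩
    | algebraMap r =>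
      have hr := hAc _ (Subalgebra.algebraMap_mem (Algebra.adjoin R (Set.range z)) r)
      rw [uS _ hr r (by simp), uT _ hr r (by simp)]
      simp
    | add x y hx hy ihx ihy =>
      have hxy := hAc _ (add_mem hx hy)
      rw [uS _ hxy (ΩS x + ΩS y) (by
          intro t; rw [map_add, add_smul, hΩS _ (hAc _ hx), hΩS _ (hAc _ hy), map_add, add_smul]),
        uT _ hxy (ΩT x + ΩT y) (by
          intro t; rw [map_add, add_smul, hΩT _ (hAc _ hx), hΩT _ (hAc _ hy), map_add, add_smul])]
      have := add_mem ihx ihy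
      rwa [add_sub_add_comm]
    | mul x y hx hy ihx ihy =>
      have hxy := hAc _ (mul_mem hx hy)
      rw [uS _ hxy (ΩS x * ΩS y) (by
          intro t; rw [map_mul, mul_smul, hΩS _ (hAc _ hy), hΩS _ (hAc _ hx), map_mul, mul_smul]),
        uT _ hxy (ΩT x * ΩT y) (by
          intro t; rw [map_mul, mul_smul, hΩT _ (hAc _ hy), hΩT _ (hAc _ hx), map_mul, mul_smul])]
      have h1 : ΩS x * ΩS y - ΩT x * ΩT y = ΩS x * (ΩS y - ΩT y) + ΩT y * (ΩS x - ΩT x) := by ring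
      rw [h1]
      exact add_mem (Ideal.mul_mem_left _ _ ihy) (Ideal.mul_mem_left _ _ ihx)
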